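/- For every γ > 0 there exists g₀ > 0, depending only on γ, C₋, C₊, such that if 0 < g_f ≤ g₀ then for all 0 ≤ ℓ ≤ k ≤ N, (1/2)·(ḡ_k/ḡ_ℓ)^γ ≤ ∏_{i=ℓ}^{k−1} (1 + γ·β_i·ḡ_i) ≤ (3/2)·(ḡ_k/ḡ_ℓ)^γ (with the empty product for ℓ = k equal to 1). -/

import Mathlib

noncomputable section

/-- The backward quadratic flow: `g N = gf` and, for `k < N`,
`g k` is the unique positive root of `β k * t ^ 2 + t - g (k + 1) = 0`. -/
def QuadFlow (β : ℕ → ℝ) (N : ℕ) (gf : ℝ) (g : ℕ → ℝ) : Prop :=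
  g N = gf ∧ ∀ k, k < N → g k = (-1 + Real.sqrt (1 + 4 * β k * g (k + 1))) / (2 * β k)

/-!
The flow satisfies the forward recursion `g (k + 1) = g k * (1 + β k * g k)`, so `g k / g l` is
exactly the product for `γ = 1`. In general `log (1 + γ x)` and `γ * log (1 + x)` agree up to
`O(x ^ 2)` with `x = β i * g i`, and `x ^ 2 ≤ C * (β i * g i ^ 2) = C * (g (i + 1) - g i)`
telescopes. The total error is therefore `O(C * gf)`, uniformly in `N`, `l` and `k`.
-/

open Filter Topology

lemma abs_log_one_add_sub_self_le_sq {x : ℝ} (hx : |x| ≤ 1 / 2) :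
    |Real.log (1 + x) - x| ≤ x ^ 2 := by
  have hpos : 0 ≤ 1 + x := by linarith [(abs_le.mp hx).1]
  have hnorm : ‖(x : ℂ)‖ = |x| := Complex.norm_real x
  have taylor : |Real.log (1 + x) - x| ≤ |x| ^ 2 * (1 - |x|)⁻¹ / 2 := by
    have := Complex.norm_log_one_add_sub_self_le (z := (x : ℂ)) (by rw [hnorm]; linarith)
    rwa [hnorm, ← Complex.ofReal_one, ← Complex.ofReal_add, ← Complex.ofReal_log hpos,
      ← Complex.ofReal_sub, Complex.norm_real, Real.norm_eq_abs] at this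
  have hinv : (1 - |x|)⁻¹ ≤ 2 := inv_le_of_inv_le₀ two_pos (by linarith)
  calc |Real.log (1 + x) - x| ≤ |x| ^ 2 * (1 - |x|)⁻¹ / 2 := taylor
    _ ≤ |x| ^ 2 * 2 / 2 := by gcongr
    _ = x ^ 2 := by rw [sq_abs]; ring

lemma abs_log_one_add_mul_sub_mul_log_le {γ x : ℝ} (hx : |x| ≤ 1 / 2) (hγx : |γ * x| ≤ 1 / 2) :
    |Real.log (1 + γ * x) - γ * Real.log (1 + x)| ≤ (γ ^ 2 + |γ|) * x ^ 2 :=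
  calc |Real.log (1 + γ * x) - γ * Real.log (1 + x)|
      = |(Real.log (1 + γ * x) - γ * x) - γ * (Real.log (1 + x) - x)| := by ring_nf
    _ ≤ |Real.log (1 + γ * x) - γ * x| + |γ| * |Real.log (1 + x) - x| := by
      rw [← abs_mul]; exact abs_sub _ _
    _ ≤ (γ * x) ^ 2 + |γ| * x ^ 2 := by
      gcongr
      · exact abs_log_one_add_sub_self_le_sq hγx
      · exact abs_log_one_add_sub_self_le_sq hx
    _ = (γ ^ 2 + |γ|) * x ^ 2 := by ring

lemma prod_one_add_pos_of_abs_lt_one {ι R : Type*} [CommRing R] [LinearOrder R]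
    [IsStrictOrderedRing R] {s : Finset ι} {x : ι → R} (hx : ∀ i ∈ s, |x i| < 1) :
    0 < ∏ i ∈ s, (1 + x i) :=
  Finset.prod_pos fun i hi ↦ by linarith [(abs_lt.mp (hx i hi)).1]

lemma abs_log_prod_one_add_mul_sub_mul_log_prod_le {ι : Type*} {s : Finset ι} {γ : ℝ} {x : ι → ℝ}
    (hx : ∀ i ∈ s, |x i| ≤ 1 / 2) (hγx : ∀ i ∈ s, |γ * x i| ≤ 1 / 2) :
    |Real.log (∏ i ∈ s, (1 + γ * x i)) - γ * Real.log (∏ i ∈ s, (1 + x i))| ≤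
      (γ ^ 2 + |γ|) * ∑ i ∈ s, x i ^ 2 := by
  rw [Real.log_prod fun i hi ↦ by linarith [(abs_le.mp (hγx i hi)).1],
    Real.log_prod fun i hi ↦ by linarith [(abs_le.mp (hx i hi)).1],
    Finset.mul_sum, ← Finset.sum_sub_distrib, Finset.mul_sum]
  exact (Finset.abs_sum_le_sum_abs _ _).trans <| Finset.sum_le_sum fun i hi ↦
    abs_log_one_add_mul_sub_mul_log_le (hx i hi) (hγx i hi)

lemma le_mul_of_log_sub_log_le_log {a b c : ℝ} (ha : 0 < a) (hb : 0 < b) (hc : 0 < c)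
    (h : Real.log a - Real.log b ≤ Real.log c) : a ≤ c * b := by
  rw [← Real.log_le_log_iff ha (by positivity), Real.log_mul hc.ne' hb.ne']
  linarith

lemma abs_sub_le_mul_of_abs_log_sub_log_le {a b ε : ℝ} (ha : 0 < a) (hb : 0 < b) (hε : 0 ≤ ε)
    (h : |Real.log a - Real.log b| ≤ Real.log (1 + ε)) : |a - b| ≤ ε * b := by
  obtain ⟨hab, hba⟩ := abs_sub_le_iff.mp h
  have a_le : a ≤ (1 + ε) * b := le_mul_of_log_sub_log_le_log ha hb (by positivity) hab
  have b_le : b ≤ (1 + ε) * a := le_mul_of_log_sub_log_le_log hb ha (by positivity) hba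
  refine abs_sub_le_iff.mpr ⟨by linarith, ?_⟩
  rcases le_total a b with hle | hle
  · linarith [mul_le_mul_of_nonneg_left hle hε]
  · linarith [mul_nonneg hε hb.le]

lemma eventually_mul_le_nhds_zero {R : Type*} [MulZeroClass R] [LinearOrder R]
    [TopologicalSpace R] [OrderTopology R] [ContinuousMul R] (a : R) {δ : R} (hδ : 0 < δ) :
    ∀ᶠ t in 𝓝 0, a * t ≤ δ := by
  have htendsto : Tendsto (a * ·) (𝓝 0) (𝓝 (a * 0)) := (continuous_const_mul a).tendsto 0
  rw [mul_zero] at htendsto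
  exact htendsto.eventually_le_const hδ

namespace QuadFlow

variable {β g : ℕ → ℝ} {N : ℕ} {gf C : ℝ}

lemma pos (hg : QuadFlow β N gf g) (hβ : ∀ k < N, 0 < β k) (hgf : 0 < gf) {k : ℕ} (hk : k ≤ N) :
    0 < g k := by
  induction hk using Nat.decreasingInduction with
  | self => rwa [hg.1]
  | of_succ k hk ih =>
    have hβk := hβ k hk
    have one_lt_sqrt : 1 < √(1 + 4 * β k * g (k + 1)) :=
      Real.lt_sqrt_of_sq_lt (by nlinarith [mul_pos hβk ih])
    rw [hg.2 k hk]
    exact div_pos (by linarith) (by positivity)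

lemma succ_sub_eq (hg : QuadFlow β N gf g) (hβ : ∀ k < N, 0 < β k) (hgf : 0 < gf) {k : ℕ}
    (hk : k < N) :
    g (k + 1) - g k = β k * g k ^ 2 := by
  have hβk := hβ k hk
  have hgk := hg.pos hβ hgf hk
  have hdiscrim : discrim (β k) 1 (-g (k + 1)) =
      √(1 + 4 * β k * g (k + 1)) * √(1 + 4 * β k * g (k + 1)) := by
    rw [Real.mul_self_sqrt (by positivity), discrim]
    ring
  linarith [(quadratic_eq_zero_iff hβk.ne' hdiscrim (g k)).mpr (.inl (hg.2 k hk))]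

lemma le_final (hg : QuadFlow β N gf g) (hβ : ∀ k < N, 0 < β k) (hgf : 0 < gf) {k : ℕ}
    (hk : k ≤ N) : g k ≤ gf := by
  induction hk using Nat.decreasingInduction with
  | self => exact hg.1.le
  | of_succ k hk ih =>
    have := hβ k hk
    have : 0 ≤ g (k + 1) - g k := by rw [hg.succ_sub_eq hβ hgf hk]; positivity
    linarith

lemma prod_one_add_mul (hg : QuadFlow β N gf g) (hβ : ∀ k < N, 0 < β k) (hgf : 0 < gf) {l k : ℕ}
    (hlk : l ≤ k) (hk : k ≤ N) : ∏ i ∈ Finset.Ico l k, (1 + β i * g i) = g k / g l := by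
  induction k, hlk using Nat.le_induction with
  | base => simp [(hg.pos hβ hgf hk).ne']
  | succ k hlk ih =>
    rw [Finset.prod_Ico_succ_top hlk, ih (by lia)]
    linear_combination -(hg.succ_sub_eq hβ hgf hk) / g l

lemma sum_sq_le (hg : QuadFlow β N gf g) (hβ : ∀ k < N, 0 < β k) (hβC : ∀ k < N, β k ≤ C)
    (hgf : 0 < gf) {l k : ℕ} (hlk : l ≤ k) (hk : k ≤ N) :
    ∑ i ∈ Finset.Ico l k, (β i * g i) ^ 2 ≤ C * (g k - g l) := by
  rw [← Finset.sum_Ico_sub g hlk, Finset.mul_sum]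
  refine Finset.sum_le_sum fun i hi ↦ ?_
  have hiN : i < N := (Finset.mem_Ico.mp hi).2.trans_le hk
  have := hβ i hiN
  calc (β i * g i) ^ 2 = β i * (β i * g i ^ 2) := by ring
    _ ≤ C * (β i * g i ^ 2) := by gcongr; exact hβC i hiN
    _ = C * (g (i + 1) - g i) := by rw [hg.succ_sub_eq hβ hgf hiN]

lemma abs_mul_le (hg : QuadFlow β N gf g) (hβ : ∀ k < N, 0 < β k) (hβC : ∀ k < N, β k ≤ C)
    (hgf : 0 < gf) {k : ℕ} (hk : k < N) : |β k * g k| ≤ C * gf := by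
  have hβk := hβ k hk
  have hgk := hg.pos hβ hgf hk.le
  rw [abs_of_pos (mul_pos hβk hgk)]
  exact mul_le_mul (hβC k hk) (hg.le_final hβ hgf hk.le) hgk.le (hβk.le.trans (hβC k hk))

lemma abs_prod_sub_rpow_le (hg : QuadFlow β N gf g) (hβ : ∀ k < N, 0 < β k)
    (hβC : ∀ k < N, β k ≤ C) (hC : 0 ≤ C) (hgf : 0 < gf) {γ ε : ℝ} (hε : 0 ≤ ε)
    (hCgf : C * gf ≤ 1 / 2) (hγCgf : |γ| * C * gf ≤ 1 / 2)
    (herror : (γ ^ 2 + |γ|) * C * gf ≤ Real.log (1 + ε)) {l k : ℕ} (hlk : l ≤ k) (hk : k ≤ N) :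
    |∏ i ∈ Finset.Ico l k, (1 + γ * β i * g i) - (g k / g l) ^ γ| ≤ ε * (g k / g l) ^ γ := by
  have hgl := hg.pos hβ hgf (hlk.trans hk)
  have hratio : 0 < g k / g l := div_pos (hg.pos hβ hgf hk) hgl
  have hx (i) (hi : i ∈ Finset.Ico l k) : |β i * g i| ≤ C * gf :=
    hg.abs_mul_le hβ hβC hgf ((Finset.mem_Ico.mp hi).2.trans_le hk)
  have hγx (i) (hi : i ∈ Finset.Ico l k) : |γ * (β i * g i)| ≤ 1 / 2 :=
    calc |γ * (β i * g i)| ≤ |γ| * (C * gf) := by rw [abs_mul]; gcongr; exact hx i hi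
      _ ≤ 1 / 2 := by rwa [← mul_assoc]
  have hprod : 0 < ∏ i ∈ Finset.Ico l k, (1 + γ * (β i * g i)) :=
    prod_one_add_pos_of_abs_lt_one fun i hi ↦ (hγx i hi).trans_lt one_half_lt_one
  simp_rw [mul_assoc γ]
  refine abs_sub_le_mul_of_abs_log_sub_log_le hprod (Real.rpow_pos_of_pos hratio γ) hε ?_
  rw [Real.log_rpow hratio, ← hg.prod_one_add_mul hβ hgf hlk hk]
  calc
    _ ≤ (γ ^ 2 + |γ|) * ∑ i ∈ Finset.Ico l k, (β i * g i) ^ 2 :=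
      abs_log_prod_one_add_mul_sub_mul_log_prod_le (fun i hi ↦ (hx i hi).trans hCgf) hγx
    _ ≤ (γ ^ 2 + |γ|) * (C * (g k - g l)) := by
      gcongr
      exact hg.sum_sq_le hβ hβC hgf hlk hk
    _ ≤ (γ ^ 2 + |γ|) * (C * gf) := by
      gcongr
      linarith [hg.le_final hβ hgf hk]
    _ ≤ Real.log (1 + ε) := by rwa [← mul_assoc]

end QuadFlow

theorem stmt_4_general (γ : ℝ) {C ε : ℝ} (hC : 0 ≤ C) (hε : 0 < ε) :
    ∃ g0 : ℝ, 0 < g0 ∧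
      ∀ (N : ℕ) (β : ℕ → ℝ), (∀ k < N, 0 < β k) → (∀ k < N, β k ≤ C) →
      ∀ gf : ℝ, 0 < gf → gf ≤ g0 →
      ∀ g : ℕ → ℝ, QuadFlow β N gf g →
      ∀ l k : ℕ, l ≤ k → k ≤ N →
        |∏ i ∈ Finset.Ico l k, (1 + γ * β i * g i) - (g k / g l) ^ γ| ≤ ε * (g k / g l) ^ γ := by
  have hlog : 0 < Real.log (1 + ε) := Real.log_pos (by linarith)
  obtain ⟨g0, hg0, hsmall⟩ := mem_nhdsGT_iff_exists_Ioc_subset.mp <| nhdsWithin_le_nhds <|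
    (eventually_mul_le_nhds_zero C one_half_pos).and <|
      (eventually_mul_le_nhds_zero (|γ| * C) one_half_pos).and
        (eventually_mul_le_nhds_zero ((γ ^ 2 + |γ|) * C) hlog)
  refine ⟨g0, hg0, fun N β hβ hβC gf hgf hgf0 g hg l k hlk hk ↦ ?_⟩
  obtain ⟨hCgf, hγCgf, herror⟩ := hsmall ⟨hgf, hgf0⟩
  exact hg.abs_prod_sub_rpow_le hβ hβC hC hgf hε.le hCgf hγCgf herror hlk hk

theorem stmt_4 (Cm Cp : ℝ) (hCm : 0 < Cm) (hCmCp : Cm ≤ Cp) (γ : ℝ) (hγ : 0 < γ) :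
    ∃ g0 : ℝ, 0 < g0 ∧
      ∀ (N : ℕ), 1 ≤ N → ∀ β : ℕ → ℝ, (∀ k, k < N → Cm ≤ β k ∧ β k ≤ Cp) →
      ∀ gf : ℝ, 0 < gf → gf ≤ g0 →
      ∀ g : ℕ → ℝ, QuadFlow β N gf g →
      ∀ l k : ℕ, l ≤ k → k ≤ N →
        (1 / 2) * (g k / g l) ^ γ ≤ ∏ i ∈ Finset.Ico l k, (1 + γ * β i * g i) ∧
        ∏ i ∈ Finset.Ico l k, (1 + γ * β i * g i) ≤ (3 / 2) * (g k / g l) ^ γ := by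
  obtain ⟨g0, hg0, hflow⟩ := stmt_4_general γ (hCm.le.trans hCmCp) one_half_pos
  refine ⟨g0, hg0, fun N _ β hβ gf hgf hgf0 g hg l k hlk hk ↦ ?_⟩
  have := abs_sub_le_iff.mp <| hflow N β (fun i hi ↦ hCm.trans_le (hβ i hi).1)
    (fun i hi ↦ (hβ i hi).2) gf hgf hgf0 g hg l k hlk hk
  constructor <;> linarith
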